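/- arXiv:2211.15678 — 2 statements merged into one kernel-verified Lean document; each statement's English description precedes it below -/
import Mathlib

section
/- (Lemma 1, zero-error dual form / tempered monotone identity) Let ρ be a state on H and ‖·‖_μ a resource norm on T_sa(H). Then inf{d_ħ^0(ρ‖Z) : Z ∈ T_sa(H), ‖Z‖_μ ≤ 1} = max{⟨W,ρ⟩ : W ∈ T_sa(H), ‖W‖_μ° ≤ 1, ‖W‖∞ ≤ ⟨W,ρ⟩}, where the maximum is attained. -/
/-! The identity is a minimax statement. Let `K` be the set of tests `-1 ≤ Q ≤ 1` with
`⟨Q, ρ⟩ ≥ 1` (`zeroErrorTests`) and `B` the unit ball of `ν`. Both are convex and compact: `K` is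
closed with bounded entries (`norm_sq_entry_le`), and `B` is compact since all norms on a
finite-dimensional space are equivalent (`isCompact_unitBall`). Sion's theorem gives a saddle point
`(Q, Z₀)` of the pairing on `K × B` (`exists_saddlePoint`), with value `m = ⟨Q, Z₀⟩`.

Then `m` is the dual norm of `Q` and `m = min_{P ∈ K} ⟨P, Z₀⟩`. It is positive, since
`⟨Q, ρ / ν ρ⟩ = 1 / ν ρ`, so the infimum of `d_ħ^0(ρ‖Z)` over `B` is at most `1 / m`. The maximiser
is `W = Q / m`: as `⟨Q, ρ⟩ = 1` (`hip_le_one`), it satisfies `⟨W, ρ⟩ = 1 / m ≥ ‖W‖∞` and has dual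
norm at most one. Conversely every feasible `W` with `⟨W, ρ⟩ > 0` yields the test `W / ⟨W, ρ⟩ ∈ K`,
which bounds `d_ħ^0(ρ‖Z)` below by `⟨W, ρ⟩` for all `Z ∈ B` (`hip_le_iInf_dEmanc`). -/

open scoped ComplexOrder
open Filter

noncomputable section

/-- The real vector space of self-adjoint (Hermitian) operators on `ℂ^ι`. -/
abbrev HMat (ι : Type) [Fintype ι] [DecidableEq ι] : Type :=
  selfAdjoint (Matrix ι ι ℂ)

variable {ι κ : Type} [Fintype ι] [DecidableEq ι] [Fintype κ] [DecidableEq κ]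

/-- The matrix underlying a self-adjoint operator is Hermitian. -/
def herm (X : HMat ι) : X.1.IsHermitian := X.2

/-- The (real) Hilbert–Schmidt inner product `⟨Q, X⟩ = Tr (Q X)`. -/
def hip (Q X : HMat ι) : ℝ := (Matrix.trace (Q.1 * X.1)).re

/-- The trace norm of a self-adjoint operator: the sum of absolute values of eigenvalues. -/
def trNorm (X : HMat ι) : ℝ := ∑ i, |(herm X).eigenvalues i|

/-- The operator norm of a self-adjoint operator: the largest absolute value of an eigenvalue. -/
def opNorm (X : HMat ι) : ℝ := ⨆ i, |(herm X).eigenvalues i|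

/-- A state: a positive semidefinite operator of unit trace. -/
def IsState (ρ : HMat ι) : Prop := ρ.1.PosSemidef ∧ Matrix.trace ρ.1 = 1

/-- A pure state: a rank-one orthogonal projection. -/
def IsPureState (φ : HMat ι) : Prop := IsState φ ∧ φ.1 * φ.1 = φ.1

/-- A norm-like function on self-adjoint operators. -/
structure MatNorm (ι : Type) [Fintype ι] [DecidableEq ι] where
  toFun : HMat ι → ℝ
  eq_zero' : ∀ X, toFun X = 0 → X = 0
  smul' : ∀ (t : ℝ) (X), toFun (t • X) = |t| * toFun X
  add_le' : ∀ X Y, toFun (X + Y) ≤ toFun X + toFun Y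

/-- A resource norm: a norm with `‖ρ‖ ≥ 1` on every state. -/
structure ResourceNorm (ι : Type) [Fintype ι] [DecidableEq ι] extends MatNorm ι where
  one_le_state' : ∀ ρ, IsState ρ → 1 ≤ toFun ρ

/-- The dual norm `‖Q‖° = sup {⟨Q, X⟩ : ‖X‖ ≤ 1}`. -/
def dualNormF (ν : HMat ι → ℝ) (Q : HMat ι) : ℝ :=
  sSup {r | ∃ X, ν X ≤ 1 ∧ r = hip Q X}

/-- Membership in the class `O_μ` of maps contracting the trace norm and the resource norms. -/
def MemO (νi : ResourceNorm ι) (νo : ResourceNorm κ) (Λ : HMat ι →ₗ[ℝ] HMat κ) : Prop :=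
  (∀ X, trNorm (Λ X) ≤ trNorm X) ∧ (∀ X, νo.toFun (Λ X) ≤ νi.toFun X)

/-- The trace-norm ε-ball around a state. -/
def ball (ρ : HMat ι) (ε : ℝ) : Set (HMat ι) :=
  {X | trNorm X ≤ 1 ∧ trNorm (X - ρ) ≤ ε}

/-- Loewner order: `A ≤ B` iff `B - A` is positive semidefinite. -/
def loew (A B : Matrix ι ι ℂ) : Prop := (B - A).PosSemidef

/-- The feasible values `⟨Q, Z⟩` entering the emancipated hypothesis testing quantity. -/
def dhSet (ρ Z : HMat ι) (ε : ℝ) : Set ℝ :=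
  {r | ∃ Q : HMat ι, loew (-(1 : Matrix ι ι ℂ)) Q.1 ∧ loew Q.1 1 ∧
        1 - ε ≤ hip Q ρ ∧ r = hip Q Z}

/-- The non-logarithmic emancipated hypothesis testing quantity `d_ħ^ε(ρ‖Z)`,
with value `+∞` when the infimum is `≤ 0`. -/
def dEmanc (ρ Z : HMat ι) (ε : ℝ) : EReal :=
  if 0 < sInf (dhSet ρ Z ε) then (((sInf (dhSet ρ Z ε))⁻¹ : ℝ) : EReal) else ⊤

/-- The emancipated hypothesis testing relative entropy `D_ħ^ε(ρ‖Z)` (base-2 logarithmic form),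
with value `+∞` when the infimum is `≤ 0`. -/
def DEmanc (ρ Z : HMat ι) (ε : ℝ) : EReal :=
  if 0 < sInf (dhSet ρ Z ε) then ((-Real.logb 2 (sInf (dhSet ρ Z ε)) : ℝ) : EReal) else ⊤



/-! ### The Hilbert–Schmidt pairing -/

lemma hip_add_left (Q R X : HMat ι) : hip (Q + R) X = hip Q X + hip R X := by
  simp [hip, add_mul]

lemma hip_smul_left (t : ℝ) (Q X : HMat ι) : hip (t • Q) X = t * hip Q X := by
  simp [hip]

lemma hip_add_right (Q X Y : HMat ι) : hip Q (X + Y) = hip Q X + hip Q Y := by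
  simp [hip, mul_add]

lemma hip_smul_right (t : ℝ) (Q X : HMat ι) : hip Q (t • X) = t * hip Q X := by
  simp [hip]

lemma continuous_hip_left (X : HMat ι) : Continuous fun Q : HMat ι => hip Q X := by
  unfold hip; fun_prop

lemma continuous_hip_right (Q : HMat ι) : Continuous fun X : HMat ι => hip Q X := by
  unfold hip; fun_prop

/-- With `A = C⋆ C`, the trace of `A B` is that of the positive semidefinite `C B C⋆`. -/
lemma trace_mul_nonneg_of_posSemidef {A B : Matrix ι ι ℂ} (hA : A.PosSemidef)
    (hB : B.PosSemidef) : 0 ≤ (Matrix.trace (A * B)).re := by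
  open scoped MatrixOrder Matrix.Norms.L2Operator in
  obtain ⟨C, rfl⟩ := CStarAlgebra.nonneg_iff_eq_star_mul_self.mp hA.nonneg
  rw [Matrix.mul_assoc, Matrix.trace_mul_comm]
  exact (Complex.le_def.mp (hB.mul_mul_conjTranspose_same C).trace_nonneg).1

/-! ### Compactness of the unit ball of a norm -/

instance : ContinuousSMul ℝ (HMat ι) where
  continuous_smul := by
    refine Continuous.subtype_mk (f := fun p : ℝ × HMat ι => p.1 • p.2.1) ?_ _
    fun_prop

instance : FiniteDimensional ℝ (HMat ι) := by
  let f : HMat ι →ₗ[ℝ] Matrix ι ι ℂ :=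
    { toFun := fun X => X.1, map_add' := fun _ _ => rfl, map_smul' := fun _ _ => rfl }
  exact FiniteDimensional.of_injective f Subtype.val_injective

/-- A copy of `HMat ι` that carries the norm `ν` instead of the matrix topology. -/
def NormedCopy (_ν : MatNorm ι) : Type := HMat ι

instance (ν : MatNorm ι) : AddCommGroup (NormedCopy ν) := inferInstanceAs (AddCommGroup (HMat ι))
instance (ν : MatNorm ι) : Module ℝ (NormedCopy ν) := inferInstanceAs (Module ℝ (HMat ι))
instance (ν : MatNorm ι) : FiniteDimensional ℝ (NormedCopy ν) :=
  inferInstanceAs (FiniteDimensional ℝ (HMat ι))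
instance (ν : MatNorm ι) : Norm (NormedCopy ν) := ⟨ν.toFun⟩

lemma MatNorm.map_zero (ν : MatNorm ι) : ν.toFun 0 = 0 := by
  simpa using ν.smul' 0 0

lemma MatNorm.nonneg (ν : MatNorm ι) (X : HMat ι) : 0 ≤ ν.toFun X := by
  have h := ν.add_le' X ((-1 : ℝ) • X)
  rw [ν.smul'] at h
  simp [ν.map_zero] at h
  linarith

lemma normedCopy_core (ν : MatNorm ι) : NormedSpace.Core ℝ (NormedCopy ν) where
  norm_nonneg := ν.nonneg
  norm_smul := ν.smul'
  norm_triangle := ν.add_le'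
  norm_eq_zero_iff X := ⟨ν.eq_zero' X, fun h => h ▸ ν.map_zero⟩

instance (ν : MatNorm ι) : NormedAddCommGroup (NormedCopy ν) :=
  NormedAddCommGroup.ofCore (normedCopy_core ν)
instance (ν : MatNorm ι) : NormedSpace ℝ (NormedCopy ν) :=
  NormedSpace.ofCore (normedCopy_core ν)

/-- The unit ball of `ν` is compact in the matrix topology: the identity from the `ν`-normed copy
is a linear map on a finite-dimensional space, hence continuous. -/
lemma isCompact_unitBall (ν : MatNorm ι) : IsCompact {Z : HMat ι | ν.toFun Z ≤ 1} := by
  have := FiniteDimensional.proper ℝ (NormedCopy ν)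
  let f : NormedCopy ν →ₗ[ℝ] HMat ι :=
    { toFun := fun X => X, map_add' := fun _ _ => rfl, map_smul' := fun _ _ => rfl }
  have h := (isCompact_closedBall (0 : NormedCopy ν) 1).image f.continuous_of_finiteDimensional
  convert h using 1
  ext Z
  constructor
  · intro hZ
    exact ⟨Z, mem_closedBall_zero_iff.mpr hZ, rfl⟩
  · rintro ⟨Y, hY, rfl⟩
    exact mem_closedBall_zero_iff.mp hY

lemma convex_unitBall (ν : MatNorm ι) : Convex ℝ {Z : HMat ι | ν.toFun Z ≤ 1} := by
  intro X hX Y hY a b ha hb hab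
  have h := ν.add_le' (a • X) (b • Y)
  rw [ν.smul', ν.smul', abs_of_nonneg ha, abs_of_nonneg hb] at h
  simp only [Set.mem_ofPred_eq] at *
  nlinarith

/-! ### The zero-error tests -/

/-- The operators `-1 ≤ Q ≤ 1`. -/
def tests (ι : Type) [Fintype ι] [DecidableEq ι] : Set (HMat ι) :=
  {Q | loew (-(1 : Matrix ι ι ℂ)) Q.1 ∧ loew Q.1 1}

/-- The tests `-1 ≤ Q ≤ 1` with zero error on `ρ`. -/
def zeroErrorTests (ρ : HMat ι) : Set (HMat ι) := tests ι ∩ {Q | 1 ≤ hip Q ρ}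

/-- At zero error, `dhSet` is the set of values of `⟨·, Z⟩` on the zero-error tests. -/
lemma dhSet_zero (ρ Z : HMat ι) : dhSet ρ Z 0 = (fun Q => hip Q Z) '' zeroErrorTests ρ := by
  ext r
  constructor
  · rintro ⟨Q, h1, h2, h3, rfl⟩
    exact ⟨Q, ⟨⟨h1, h2⟩, by simpa using h3⟩, rfl⟩
  · rintro ⟨Q, ⟨⟨h1, h2⟩, h3⟩, rfl⟩
    exact ⟨Q, h1, h2, by simpa using h3, rfl⟩

omit [Fintype ι] [DecidableEq ι] in
lemma convex_posSemidef : Convex ℝ {A : Matrix ι ι ℂ | A.PosSemidef} := by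
  intro A hA B hB a b ha hb _
  exact (hA.smul ha).add (hB.smul hb)

omit [DecidableEq ι] in
lemma isClosed_posSemidef : IsClosed {A : Matrix ι ι ℂ | A.PosSemidef} := by
  simp only [Matrix.posSemidef_iff_dotProduct_mulVec, Set.ofPred_and, Set.ofPred_forall]
  refine IsClosed.inter ?_ (isClosed_iInter fun x => ?_)
  · exact isClosed_eq (by fun_prop) continuous_id
  · exact isClosed_le continuous_const (by fun_prop)

lemma convex_zeroErrorTests (ρ : HMat ι) : Convex ℝ (zeroErrorTests ρ) := by
  rintro P ⟨⟨hP1, hP2⟩, hP⟩ Q ⟨⟨hQ1, hQ2⟩, hQ⟩ a b ha hb hab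
  refine ⟨⟨?_, ?_⟩, ?_⟩
  · have h := convex_posSemidef hP1 hQ1 ha hb hab
    simp only [Set.mem_ofPred_eq] at h
    unfold loew
    convert h using 1
    obtain rfl : b = 1 - a := by linarith
    simp only [AddSubgroup.coe_add, selfAdjoint.val_smul]
    module
  · have h := convex_posSemidef hP2 hQ2 ha hb hab
    simp only [Set.mem_ofPred_eq] at h
    unfold loew
    convert h using 1
    obtain rfl : b = 1 - a := by linarith
    simp only [AddSubgroup.coe_add, selfAdjoint.val_smul]
    module
  · simp only [Set.mem_ofPred_eq, hip_add_left, hip_smul_left] at *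
    nlinarith

/-- Entries of `-1 ≤ Q ≤ 1` are bounded, because `Tr (1 - Q) (1 + Q) ≥ 0` says
`∑ |Q i j| ^ 2 ≤ Tr 1`. -/
lemma norm_sq_entry_le {Q : HMat ι} (hQ : Q ∈ tests ι) (i j : ι) :
    ‖Q.1 i j‖ ^ 2 ≤ Fintype.card ι := by
  have h := trace_mul_nonneg_of_posSemidef hQ.1 hQ.2
  have e : (Q.1 - -1) * (1 - Q.1) = 1 - Q.1 * Q.1 := by noncomm_ring
  have hsum : (Matrix.trace (Q.1 * Q.1)).re = ∑ i, ∑ j, ‖Q.1 i j‖ ^ 2 := by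
    simp only [Matrix.trace, Matrix.diag, Matrix.mul_apply, Complex.re_sum]
    refine Finset.sum_congr rfl fun i _ => Finset.sum_congr rfl fun j _ => ?_
    rw [← (herm Q).apply j i, RCLike.star_def, Complex.mul_conj, Complex.normSq_eq_norm_sq,
      Complex.ofReal_re]
  rw [e, Matrix.trace_sub, Complex.sub_re, hsum] at h
  simp only [Matrix.trace_one, Complex.natCast_re] at h
  have h1 : ‖Q.1 i j‖ ^ 2 ≤ ∑ j, ‖Q.1 i j‖ ^ 2 :=
    Finset.single_le_sum (f := fun j => ‖Q.1 i j‖ ^ 2) (fun _ _ => by positivity)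
      (Finset.mem_univ j)
  have h2 : ∑ j, ‖Q.1 i j‖ ^ 2 ≤ ∑ i, ∑ j, ‖Q.1 i j‖ ^ 2 :=
    Finset.single_le_sum (f := fun i => ∑ j, ‖Q.1 i j‖ ^ 2) (fun _ _ => by positivity)
      (Finset.mem_univ i)
  linarith

lemma isCompact_zeroErrorTests (ρ : HMat ι) : IsCompact (zeroErrorTests ρ) := by
  have hclosed : IsClosed (zeroErrorTests ρ) := by
    refine IsClosed.inter (IsClosed.inter ?_ ?_) ?_
    · exact isClosed_posSemidef.preimage (f := fun Q : HMat ι => Q.1 - -1) (by fun_prop)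
    · exact isClosed_posSemidef.preimage (f := fun Q : HMat ι => 1 - Q.1) (by fun_prop)
    · exact isClosed_le continuous_const (continuous_hip_left ρ)
  have hbox : IsCompact (Set.univ.pi fun _ : ι => Set.univ.pi fun _ : ι =>
      Metric.closedBall (0 : ℂ) (Real.sqrt (Fintype.card ι))) :=
    isCompact_univ_pi fun _ => isCompact_univ_pi fun _ => isCompact_closedBall _ _
  have hemb : Topology.IsClosedEmbedding (fun X : HMat ι => X.1) := by
    refine IsClosed.isClosedEmbedding_subtypeVal ?_
    exact isClosed_eq (f := fun A : Matrix ι ι ℂ => star A) (by fun_prop) continuous_id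
  refine (hemb.isCompact_preimage hbox).of_isClosed_subset hclosed fun Q hQ => ?_
  intro i _ j _
  rw [mem_closedBall_zero_iff]
  exact Real.le_sqrt_of_sq_le (norm_sq_entry_le hQ.1 i j)

lemma one_mem_zeroErrorTests {ρ : HMat ι} (hρ : IsState ρ) : 1 ∈ zeroErrorTests ρ := by
  refine ⟨⟨?_, ?_⟩, ?_⟩
  · simpa [loew] using Matrix.PosSemidef.one.add Matrix.PosSemidef.one
  · simpa [loew] using Matrix.PosSemidef.zero
  · simp [hip, hρ.2]

/-- The bound `Q ≤ 1` limits `⟨Q, ρ⟩` to at most `Tr ρ = 1`. -/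
lemma hip_le_one {Q ρ : HMat ι} (hρ : IsState ρ) (hQ : Q ∈ tests ι) : hip Q ρ ≤ 1 := by
  have h := trace_mul_nonneg_of_posSemidef hQ.2 hρ.1
  rw [sub_mul, one_mul, Matrix.trace_sub, hρ.2, Complex.sub_re, Complex.one_re] at h
  exact sub_nonneg.mp h

/-! ### Eigenvalue bounds and the operator norm -/

/-- By the spectral theorem, `c + s W` has the eigenvalues `c + s λ`, `λ` running over those
of `W`. -/
lemma posSemidef_affine_iff (W : HMat ι) (c s : ℝ) :
    (c • (1 : Matrix ι ι ℂ) + s • W.1).PosSemidef ↔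
      ∀ i, 0 ≤ c + s * (herm W).eigenvalues i := by
  constructor
  · intro h i
    have hv := (Matrix.posSemidef_iff_dotProduct_mulVec.mp h).2
      ⇑((herm W).eigenvectorBasis i)
    have hn : star ⇑((herm W).eigenvectorBasis i) ⬝ᵥ ⇑((herm W).eigenvectorBasis i) = 1 := by
      have := (herm W).eigenvectorBasis.orthonormal.1 i
      rw [dotProduct_comm, ← EuclideanSpace.inner_eq_star_dotProduct, inner_self_eq_norm_sq_to_K,
        this]
      simp
    rw [Matrix.add_mulVec, Matrix.smul_mulVec, Matrix.smul_mulVec, Matrix.one_mulVec,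
      (herm W).mulVec_eigenvectorBasis, dotProduct_add, dotProduct_smul, dotProduct_smul,
      dotProduct_smul, hn] at hv
    simpa using (Complex.le_def.mp hv).1
  · intro h
    set U : Matrix ι ι ℂ := ((herm W).eigenvectorUnitary).1
    have hU : U * star U = 1 := Unitary.coe_mul_star_self _
    have hW : W.1 = U * Matrix.diagonal (RCLike.ofReal ∘ (herm W).eigenvalues) * star U := by
      conv_lhs => rw [(herm W).spectral_theorem, Unitary.conjStarAlgAut_apply]
    have hD : (c • (1 : Matrix ι ι ℂ) + s • W.1) =
        U * Matrix.diagonal (fun i => ((c + s * (herm W).eigenvalues i : ℝ) : ℂ)) * star U := by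
      have e : Matrix.diagonal (fun i => ((c + s * (herm W).eigenvalues i : ℝ) : ℂ)) =
          c • (1 : Matrix ι ι ℂ) +
            s • Matrix.diagonal (RCLike.ofReal ∘ (herm W).eigenvalues) := by
        ext i j
        by_cases hij : i = j
        · subst hij; simp
        · simp [hij]
      rw [e, mul_add, add_mul, mul_smul_comm, smul_mul_assoc, mul_one, hU, mul_smul_comm,
        smul_mul_assoc, ← hW]
    rw [hD]
    refine Matrix.PosSemidef.mul_mul_conjTranspose_same ?_ U
    refine Matrix.PosSemidef.diagonal fun i => ?_
    exact Complex.zero_le_real.mpr (h i)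

lemma smul_mem_tests_iff (W : HMat ι) (s : ℝ) :
    s • W ∈ tests ι ↔ ∀ i, |s * (herm W).eigenvalues i| ≤ 1 := by
  have h1 := posSemidef_affine_iff W 1 s
  have h2 := posSemidef_affine_iff W 1 (-s)
  have e1 : (s • W).1 - -1 = (1 : ℝ) • (1 : Matrix ι ι ℂ) + s • W.1 := by
    simp only [selfAdjoint.val_smul]; module
  have e2 : 1 - (s • W).1 = (1 : ℝ) • (1 : Matrix ι ι ℂ) + (-s) • W.1 := by
    simp only [selfAdjoint.val_smul]; module
  simp only [tests, loew, Set.mem_ofPred_eq, e1, e2, h1, h2, abs_le]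
  constructor
  · rintro ⟨ha, hb⟩ i
    constructor <;> linarith [ha i, hb i]
  · intro h
    constructor <;> intro i <;> linarith [(h i).1, (h i).2]

lemma abs_eigenvalues_le_opNorm (W : HMat ι) (i : ι) : |(herm W).eigenvalues i| ≤ opNorm W :=
  le_ciSup (f := fun i => |(herm W).eigenvalues i|) (Set.finite_range _).bddAbove i

lemma opNorm_le {W : HMat ι} {t : ℝ} (ht : 0 ≤ t) (h : ∀ i, |(herm W).eigenvalues i| ≤ t) :
    opNorm W ≤ t :=
  Real.iSup_le h ht

/-! ### Duality -/

/-- Hölder's inequality for `ν` and its dual; compactness of the unit ball of `ν` ensures that the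
supremum defining the dual norm is over a bounded set. -/
lemma hip_le_dualNormF (ν : MatNorm ι) (Q : HMat ι) {Z : HMat ι} (hZ : ν.toFun Z ≤ 1) :
    hip Q Z ≤ dualNormF ν.toFun Q := by
  refine le_csSup ?_ ⟨Z, hZ, rfl⟩
  convert ((isCompact_unitBall ν).image (continuous_hip_right Q)).bddAbove using 1
  ext r
  constructor
  · rintro ⟨X, hX, rfl⟩; exact ⟨X, hX, rfl⟩
  · rintro ⟨X, hX, rfl⟩; exact ⟨X, hX, rfl⟩

lemma sInf_dhSet_le {ρ Q : HMat ι} (hQ : Q ∈ zeroErrorTests ρ) (Z : HMat ι) :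
    sInf (dhSet ρ Z 0) ≤ hip Q Z := by
  rw [dhSet_zero]
  exact csInf_le ((isCompact_zeroErrorTests ρ).image (continuous_hip_left Z)).bddBelow
    ⟨Q, hQ, rfl⟩

/-- Weak duality: a feasible `W` with `⟨W, ρ⟩ > 0`, rescaled by `1 / ⟨W, ρ⟩`, is a zero-error
test, and its value on the unit ball of `ν` is at most `1 / ⟨W, ρ⟩`. -/
lemma hip_le_iInf_dEmanc (ν : ResourceNorm ι) {ρ W : HMat ι} (hW : dualNormF ν.toFun W ≤ 1)
    (hop : opNorm W ≤ hip W ρ) :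
    ((hip W ρ : ℝ) : EReal) ≤ ⨅ Z ∈ {Z : HMat ι | ν.toFun Z ≤ 1}, dEmanc ρ Z 0 := by
  refine le_iInf₂ fun Z hZ => ?_
  unfold dEmanc
  split_ifs with hpos
  swap
  · exact le_top
  rw [EReal.coe_le_coe_iff]
  rcases le_or_gt (hip W ρ) 0 with ht | ht
  · exact ht.trans (inv_pos.mpr hpos).le
  have hQ : (hip W ρ)⁻¹ • W ∈ zeroErrorTests ρ := by
    refine ⟨(smul_mem_tests_iff _ _).mpr fun i => ?_, ?_⟩
    · rw [abs_mul, abs_of_pos (inv_pos.mpr ht), inv_mul_le_one₀ ht]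
      exact (abs_eigenvalues_le_opNorm W i).trans hop
    · simp [hip_smul_left, inv_mul_cancel₀ ht.ne']
  have h := sInf_dhSet_le hQ Z
  rw [hip_smul_left] at h
  have hZ' : hip W Z ≤ 1 := (hip_le_dualNormF ν.toMatNorm W hZ).trans hW
  rw [le_inv_comm₀ ht hpos]
  exact h.trans (mul_le_of_le_one_right (inv_pos.mpr ht).le hZ')

/-- The minimax theorem for the bilinear pairing of zero-error tests with the unit ball of `ν`. -/
lemma exists_saddlePoint (ν : MatNorm ι) {ρ : HMat ι} (hρ : IsState ρ) :
    ∃ Q ∈ zeroErrorTests ρ, ∃ Z ∈ {Z : HMat ι | ν.toFun Z ≤ 1},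
      IsSaddlePointOn (zeroErrorTests ρ) {Z : HMat ι | ν.toFun Z ≤ 1} hip Q Z := by
  have hl (Z : HMat ι) : IsLinearMap ℝ fun Q : HMat ι => hip Q Z :=
    ⟨fun _ _ => hip_add_left _ _ _, fun _ _ => hip_smul_left _ _ _⟩
  have hr (Q : HMat ι) : IsLinearMap ℝ fun Z : HMat ι => hip Q Z :=
    ⟨fun _ _ => hip_add_right _ _ _, fun _ _ => hip_smul_right _ _ _⟩
  refine Sion.exists_isSaddlePointOn ⟨1, one_mem_zeroErrorTests hρ⟩ (convex_zeroErrorTests ρ)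
    (isCompact_zeroErrorTests ρ) ?_ ?_ (convex_unitBall ν) ⟨0, ?_⟩ (isCompact_unitBall ν) ?_ ?_
  · exact fun Z _ => (continuous_hip_left Z).lowerSemicontinuous.lowerSemicontinuousOn _
  · exact fun Z _ => (((hl Z).mk' _).convexOn (convex_zeroErrorTests ρ)).quasiconvexOn
  · simp [ν.map_zero]
  · exact fun Q _ => (continuous_hip_right Q).upperSemicontinuous.upperSemicontinuousOn _
  · exact fun Q _ => (((hr Q).mk' _).concaveOn (convex_unitBall ν)).quasiconcaveOn

/-- **Lemma 1 (zero-error dual form / tempered monotone identity).**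
`inf {d_ħ^0(ρ‖Z) : ‖Z‖_μ ≤ 1} = max {⟨W,ρ⟩ : ‖W‖_μ° ≤ 1, ‖W‖∞ ≤ ⟨W,ρ⟩}`,
with the maximum attained. -/
theorem etruscan_dual_zero_error
    {d : Type} [Fintype d] [DecidableEq d]
    (ν : ResourceNorm d) (ρ : HMat d) (hρ : IsState ρ) :
    ∃ W : HMat d, dualNormF ν.toFun W ≤ 1 ∧ opNorm W ≤ hip W ρ ∧
      (⨅ Z ∈ {Z : HMat d | ν.toFun Z ≤ 1}, dEmanc ρ Z 0) = ((hip W ρ : ℝ) : EReal) ∧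
      ∀ W' : HMat d, dualNormF ν.toFun W' ≤ 1 → opNorm W' ≤ hip W' ρ →
        ((hip W' ρ : ℝ) : EReal) ≤ ⨅ Z ∈ {Z : HMat d | ν.toFun Z ≤ 1}, dEmanc ρ Z 0 := by
  obtain ⟨Q, hQ, Z₀, hZ₀, hsaddle⟩ := exists_saddlePoint ν.toMatNorm hρ
  set m := hip Q Z₀ with hm
  have hmin : ∀ P ∈ zeroErrorTests ρ, m ≤ hip P Z₀ := fun P hP => hsaddle P hP Z₀ hZ₀
  have hmax : ∀ Z, ν.toFun Z ≤ 1 → hip Q Z ≤ m := fun Z hZ => hsaddle Q hQ Z hZ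
  have hρν : 0 < ν.toFun ρ := one_pos.trans_le (ν.one_le_state' ρ hρ)
  have hQρ : hip Q ρ = 1 := le_antisymm (hip_le_one hρ hQ.1) hQ.2
  -- The normalised state `ρ / ν ρ` lies in the unit ball, so the value of the game is positive.
  have hmpos : 0 < m := by
    have h := hmax ((ν.toFun ρ)⁻¹ • ρ) (by
      rw [ν.smul', abs_of_pos (inv_pos.mpr hρν), inv_mul_cancel₀ hρν.ne'])
    rw [hip_smul_right, hQρ, mul_one] at h
    exact (inv_pos.mpr hρν).trans_le h
  have hWρ : hip (m⁻¹ • Q) ρ = m⁻¹ := by rw [hip_smul_left, hQρ, mul_one]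
  have hdual : dualNormF ν.toFun (m⁻¹ • Q) ≤ 1 := by
    refine Real.sSup_le ?_ zero_le_one
    rintro r ⟨X, hX, rfl⟩
    rw [hip_smul_left, inv_mul_le_one₀ hmpos]
    exact hmax X hX
  have hop : opNorm (m⁻¹ • Q) ≤ hip (m⁻¹ • Q) ρ := by
    rw [hWρ]
    have h : m • (m⁻¹ • Q) ∈ tests d := by rw [smul_inv_smul₀ hmpos.ne']; exact hQ.1
    refine opNorm_le (inv_pos.mpr hmpos).le fun i => ?_
    have hi := (smul_mem_tests_iff (m⁻¹ • Q) m).mp h i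
    rw [abs_mul, abs_of_pos hmpos] at hi
    have hi' := (le_div_iff₀' hmpos).mpr hi
    rwa [one_div] at hi'
  have hsInf : sInf (dhSet ρ Z₀ 0) = m := by
    refine le_antisymm (sInf_dhSet_le hQ Z₀) ?_
    rw [dhSet_zero]
    refine le_csInf ⟨_, Q, hQ, rfl⟩ ?_
    rintro r ⟨P, hP, rfl⟩
    exact hmin P hP
  refine ⟨m⁻¹ • Q, hdual, hop, le_antisymm ?_ (hip_le_iInf_dEmanc ν hdual hop),
    fun W' h1 h2 => hip_le_iInf_dEmanc ν h1 h2⟩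
  refine (iInf₂_le Z₀ hZ₀).trans (le_of_eq ?_)
  rw [dEmanc, hsInf, if_pos hmpos, hWρ]
end
end

section
/- (Lemma 2, the ε-δ lemma) Let ρ be a state on H, ‖·‖_μ a resource norm on T_sa(H), and ε, δ ∈ [0,1) with δ + ε < 1. Then inf{log₂‖X‖_μ : X ∈ B_ε(ρ)} ≥ inf{D_ħ^δ(ρ‖Z) : Z ∈ T_sa(H), ‖Z‖_μ ≤ 1} + log₂(1 − δ − ε). -/
/-!
The variational inequality `|⟨Q, Y⟩| ≤ ‖Y‖₁` for `-1 ≤ Q ≤ 1` (`abs_hip_le_trNorm`) drives the proof.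
For `X ∈ B_ε(ρ)` and any test `Q` with `⟨Q, ρ⟩ ≥ 1 - δ` it gives
`⟨Q, X⟩ = ⟨Q, ρ⟩ + ⟨Q, X - ρ⟩ ≥ 1 - δ - ε`. Taking `Q = 1` shows `X ≠ 0`, so `Z = X / ‖X‖_μ` is an
admissible point of the infimum over the unit ball, and every feasible value `⟨Q, Z⟩` is at least
`(1 - δ - ε) / ‖X‖_μ > 0`. Hence `D_ħ^δ(ρ‖Z) ≤ log₂ ‖X‖_μ - log₂ (1 - δ - ε)`.
-/

open scoped ComplexOrder
open Filter

noncomputable section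

variable {ι κ : Type} [Fintype ι] [DecidableEq ι] [Fintype κ] [DecidableEq κ]

/-- Hölder duality between the trace norm and the order interval `[-1, 1]`. In an eigenbasis `U` of
`Y`, `⟨Q, Y⟩` is the sum of the eigenvalues of `Y` weighted by the diagonal of `U⋆QU`, whose entries
lie in `[-1, 1]`. -/
lemma abs_hip_le_trNorm (Q Y : HMat ι) (h1 : loew (-(1 : Matrix ι ι ℂ)) Q.1) (h2 : loew Q.1 1) :
    |hip Q Y| ≤ trNorm Y := by
  set U : Matrix ι ι ℂ := ((herm Y).eigenvectorUnitary : Matrix ι ι ℂ) with hU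
  have hUU : star U * U = 1 := Unitary.coe_star_mul_self _
  have hspec : Y.1 = U * Matrix.diagonal (RCLike.ofReal ∘ (herm Y).eigenvalues) * star U := by
    conv_lhs => rw [(herm Y).spectral_theorem, Unitary.conjStarAlgAut_apply]
  have htr : hip Q Y = ∑ i, ((star U * Q.1 * U) i i).re * (herm Y).eigenvalues i := by
    have h : Matrix.trace (Q.1 * Y.1) = Matrix.trace
        ((star U * Q.1 * U) * Matrix.diagonal (RCLike.ofReal ∘ (herm Y).eigenvalues)) := by
      conv_lhs => rw [hspec]
      rw [← mul_assoc, Matrix.trace_mul_comm]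
      simp only [mul_assoc]
    unfold hip
    rw [h, Matrix.trace, Complex.re_sum]
    refine Finset.sum_congr rfl fun i _ => ?_
    rw [Matrix.diag_apply, Matrix.mul_diagonal]
    simp
  have hdiag : ∀ i, |((star U * Q.1 * U) i i).re| ≤ 1 := by
    intro i
    have a1 := (h1.conjTranspose_mul_mul_same U).diag_nonneg (i := i)
    have a2 := (h2.conjTranspose_mul_mul_same U).diag_nonneg (i := i)
    rw [← Matrix.star_eq_conjTranspose, mul_sub, sub_mul] at a1 a2
    simp only [mul_neg, neg_mul, mul_one, hUU] at a1 a2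
    have b1 := (Complex.le_def.mp a1).1
    have b2 := (Complex.le_def.mp a2).1
    simp at b1 b2
    rw [abs_le]
    constructor <;> linarith
  rw [htr]
  refine (Finset.abs_sum_le_sum_abs _ _).trans (Finset.sum_le_sum fun i _ => ?_)
  rw [abs_mul]
  exact mul_le_of_le_one_left (abs_nonneg _) (hdiag i)

lemma hip_sub_right (Q X Y : HMat ι) : hip Q (X - Y) = hip Q X - hip Q Y := by
  simp [hip, mul_sub, Matrix.trace_sub]

/-- A test accepting `ρ` with value at least `1 - δ` accepts every point of `B_ε(ρ)` with value at
least `1 - δ - ε`. -/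
lemma le_hip_of_mem_ball {ρ X Q : HMat ι} {ε δ : ℝ} (hX : X ∈ ball ρ ε)
    (h1 : loew (-(1 : Matrix ι ι ℂ)) Q.1) (h2 : loew Q.1 1) (hQ : 1 - δ ≤ hip Q ρ) :
    1 - δ - ε ≤ hip Q X := by
  have h := (abs_le.mp ((abs_hip_le_trNorm Q (X - ρ) h1 h2).trans hX.2)).1
  rw [hip_sub_right] at h
  linarith

lemma loew_neg_one_one : loew (-(1 : Matrix ι ι ℂ)) (1 : HMat ι).1 := by
  have h : (1 : HMat ι).1 - -(1 : Matrix ι ι ℂ) = 1 + 1 := by simp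
  unfold loew
  rw [h]
  exact Matrix.PosSemidef.one.add Matrix.PosSemidef.one

lemma loew_one_one : loew (1 : HMat ι).1 (1 : Matrix ι ι ℂ) := by
  have h : (1 : Matrix ι ι ℂ) - (1 : HMat ι).1 = 0 := by simp
  unfold loew
  rw [h]
  exact Matrix.PosSemidef.zero

lemma hip_one_state {ρ : HMat ι} (hρ : IsState ρ) : hip 1 ρ = 1 := by
  simp [hip, hρ.2]

lemma MatNorm.pos_of_ne_zero (ν : MatNorm ι) {X : HMat ι} (hX : X ≠ 0) : 0 < ν.toFun X := by
  have h0 : ν.toFun 0 = 0 := by simpa using ν.smul' 0 0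
  have hneg : ν.toFun (-X) = ν.toFun X := by simpa using ν.smul' (-1) X
  have hadd := ν.add_le' X (-X)
  rw [add_neg_cancel, h0, hneg] at hadd
  exact lt_of_le_of_ne (by linarith) fun h => hX (ν.eq_zero' X h.symm)

/-- **Lemma 2 (the ε-δ lemma).** For `ε, δ ∈ [0,1)` with `δ + ε < 1`:
`inf {log₂ ‖X‖_μ : X ∈ B_ε(ρ)} ≥ inf {D_ħ^δ(ρ‖Z) : ‖Z‖_μ ≤ 1} + log₂(1 − δ − ε)`. -/
theorem eps_delta_lemma
    {d : Type} [Fintype d] [DecidableEq d]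
    (ν : ResourceNorm d) (ρ : HMat d) (hρ : IsState ρ)
    (ε δ : ℝ) (hε0 : 0 ≤ ε) (hε1 : ε < 1) (hδ0 : 0 ≤ δ) (hδ1 : δ < 1)
    (hsum : δ + ε < 1) :
    (⨅ Z ∈ {Z : HMat d | ν.toFun Z ≤ 1}, DEmanc ρ Z δ) +
        ((Real.logb 2 (1 - δ - ε) : ℝ) : EReal) ≤
      ⨅ X ∈ ball ρ ε, ((Real.logb 2 (ν.toFun X) : ℝ) : EReal) := by
  refine le_iInf₂ fun X hX => ?_
  have hc : 0 < 1 - δ - ε := by linarith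
  have hone : 1 - δ ≤ hip 1 ρ := by rw [hip_one_state hρ]; linarith
  have hX0 : X ≠ 0 := by
    rintro rfl
    have h := le_hip_of_mem_ball hX loew_neg_one_one loew_one_one hone
    simp [hip] at h
    linarith
  have hpos : 0 < ν.toFun X := ν.toMatNorm.pos_of_ne_zero hX0
  set Z : HMat d := (ν.toFun X)⁻¹ • X with hZ
  have hZ1 : ν.toFun Z ≤ 1 := by
    rw [hZ, ν.smul', abs_of_pos (inv_pos.mpr hpos), inv_mul_cancel₀ hpos.ne']
  have hinf : (1 - δ - ε) / ν.toFun X ≤ sInf (dhSet ρ Z δ) := by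
    -- `Q = 1` is feasible; nonemptiness matters because `sInf ∅ = 0` in `ℝ`.
    refine le_csInf ⟨_, 1, loew_neg_one_one, loew_one_one, hone, rfl⟩ ?_
    rintro r ⟨Q, h1, h2, h3, rfl⟩
    rw [hZ, hip_smul_right, div_eq_inv_mul]
    exact mul_le_mul_of_nonneg_left (le_hip_of_mem_ball hX h1 h2 h3) (inv_pos.mpr hpos).le
  have hq : 0 < (1 - δ - ε) / ν.toFun X := div_pos hc hpos
  have hD : DEmanc ρ Z δ ≤ ((Real.logb 2 (ν.toFun X) - Real.logb 2 (1 - δ - ε) : ℝ) : EReal) := by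
    unfold DEmanc
    rw [if_pos (hq.trans_le hinf), EReal.coe_le_coe_iff]
    have h := Real.logb_le_logb_of_le one_lt_two hq hinf
    rw [Real.logb_div hc.ne' hpos.ne'] at h
    linarith
  calc _ ≤ ((Real.logb 2 (ν.toFun X) - Real.logb 2 (1 - δ - ε) : ℝ) : EReal)
        + ((Real.logb 2 (1 - δ - ε) : ℝ) : EReal) := by
        gcongr
        exact (iInf₂_le Z hZ1).trans hD
    _ = _ := by
        rw [← EReal.coe_add, sub_add_cancel]
end
end
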